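/- Let n ≥ 4 and 2 ≤ k ≤ n−2 be integers, let A be an (n−k)×n matrix over ℂ with y_{i,j}(A) ≠ 0 for all 0 ≤ i ≤ n−k and 0 ≤ j ≤ k, and let c be an integer with −⌊(k−2)/2⌋ ≤ c ≤ ⌈(n−k−2)/2⌉. Then p_{J⁺_{n−c}}(A) / p_{J_{n−c}}(A) = Σ_{(a,b) : a−b = 2c−1, 0 ≤ a ≤ n−k−1, 1 ≤ b ≤ k−1} ( y_{a,b+1} y_{a+1,b−1} )/( y_{a,b} y_{a+1,b} ) + Σ_{(a,b) : a−b = 2c−1, 1 ≤ a ≤ n−k−1, 1 ≤ b ≤ k} ( y_{a−1,b} y_{a+1,b−1} )/( y_{a,b−1} y_{a,b} ), where all y's are evaluated at A. -/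

import Mathlib

open Finset

/-- The set `[m] = {1, …, m} ⊆ ℤ/nℤ` (with `[0] = ∅`). -/
def seg (n m : ℕ) : Finset (ZMod n) := (Finset.Icc 1 m).image (fun t : ℕ => (t : ZMod n))

/-- The Plücker coordinate `p_J(A)` of an `r×n` matrix `A` whose columns are indexed by
`ℤ/nℤ`: the determinant of the `r×r` submatrix of `A` formed by the columns indexed by
`J`, ordered by the representatives `1, …, n` in increasing order (and `0` if `J` does
not have exactly `r` elements).  The auxiliary key `x ↦ (x−1).val` is order-isomorphic
to the representative in `{1, …, n}`. -/
noncomputable def plucker (n r : ℕ) (A : Matrix (Fin r) (ZMod n) ℂ)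
    (J : Finset (ZMod n)) : ℂ :=
  if h : (J.image (fun x => (x - 1).val)).card = r then
    (A.submatrix id
      (fun i => ((((J.image (fun x => (x - 1).val)).orderIsoOfFin h i :
        (J.image (fun x => (x - 1).val))) : ℕ) : ZMod n) + 1)).det
  else 0

/-- The cyclic interval `J_i = {i+1, …, i+(n−k)} ⊆ ℤ/nℤ`. -/
def Jcyc (n k : ℕ) (i : ZMod n) : Finset (ZMod n) :=
  (Finset.Icc 1 (n - k)).image (fun t : ℕ => i + (t : ZMod n))

/-- `J_i⁺ = (J_i ∖ {i+n−k}) ∪ {i+n−k+1}`. -/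
def Jplus (n k : ℕ) (i : ZMod n) : Finset (ZMod n) :=
  insert (i + (((n - k + 1 : ℕ)) : ZMod n)) ((Jcyc n k i).erase (i + (((n - k : ℕ)) : ZMod n)))

/-- The checkboard label `J^ch_{i,j} = σ^{−⌈(i+j)/2⌉}( [i] ∪ ([n−k+j]∖[i+j]) )`. -/
def Jch (k n i j : ℕ) : Finset (ZMod n) :=
  (seg n i ∪ (seg n (n - k + j) \ seg n (i + j))).image
    (fun x => x - (((i + j + 1) / 2 : ℕ) : ZMod n))

/-- The Plücker coordinates `y_{i,j}` attached to the checkboard graph. -/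
noncomputable def ych (k n : ℕ) (A : Matrix (Fin (n - k)) (ZMod n) ℂ) (i j : ℕ) : ℂ :=
  plucker n (n - k) A (Jch k n i j)

/-- First sum appearing in the superpotential formulas:
`Σ_{a−b=d, 0 ≤ a ≤ n−k−1, 1 ≤ b ≤ k−1} (y_{a,b+1} y_{a+1,b−1})/(y_{a,b} y_{a+1,b})`. -/
noncomputable def sumA (k n : ℕ) (y : ℕ → ℕ → ℂ) (d : ℤ) : ℂ :=
  ∑ p ∈ ((Finset.range (n - k)) ×ˢ (Finset.Icc 1 (k - 1))).filter
      (fun p => (p.1 : ℤ) - (p.2 : ℤ) = d),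
    (y p.1 (p.2 + 1) * y (p.1 + 1) (p.2 - 1)) / (y p.1 p.2 * y (p.1 + 1) p.2)

/-- Second sum appearing in the superpotential formulas:
`Σ_{a−b=d, 1 ≤ a ≤ n−k−1, 1 ≤ b ≤ k} (y_{a−1,b} y_{a+1,b−1})/(y_{a,b−1} y_{a,b})`. -/
noncomputable def sumB (k n : ℕ) (y : ℕ → ℕ → ℂ) (d : ℤ) : ℂ :=
  ∑ p ∈ ((Finset.Icc 1 (n - k - 1)) ×ˢ (Finset.Icc 1 k)).filter
      (fun p => (p.1 : ℤ) - (p.2 : ℤ) = d),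
    (y (p.1 - 1) p.2 * y (p.1 + 1) (p.2 - 1)) / (y p.1 (p.2 - 1) * y p.1 p.2)

/-!
Plücker coordinates are indexed by unordered sets, so the three-term Plücker relation for exchanged
columns `x < y < z < w` is unchanged when these are rotated to `y, z, w, x`. It therefore holds
without a sign for any four cyclically ordered columns in `ℤ/nℤ`.

Put `m = n - k - c`. When two labels `J^ch` adjacent on the zigzag between the diagonals
`i - j = 2c - 1` and `i - j = 2c` are compared, this relation turns the corresponding summand into
the difference of their ratios `p_{J \ {m} ∪ {m + 1}} / p_J`. The sum telescopes: the zigzag starts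
at `J_{n-c}`, whose ratio is the left-hand side, and at the boundary of the grid the last summand is
itself such a ratio.
-/

section SortedDet

open Matrix (detRowAlternating vecCons)

variable {ι R : Type*} [CommRing R]

theorem det_smul_eq_sum_det_updateRow_smul {m : Type*} [Fintype m] [DecidableEq m]
    (M : Matrix m m R) (w : m → R) : M.det • w = ∑ i, (M.updateRow i w).det • M i := by
  rw [← M.det_transpose, ← Matrix.mulVec_cramer]
  ext s
  simp [Matrix.mulVec, dotProduct, Matrix.cramer_transpose_apply, mul_comm]

theorem map_vecCons_vecCons_swap {M N : Type*} [AddCommGroup M] [AddCommGroup N] [Module R M]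
    [Module R N] {m : ℕ} (f : M [⋀^Fin (m + 2)]→ₗ[R] N) (x y : M) (u : Fin m → M) :
    f (vecCons x (vecCons y u)) = -f (vecCons y (vecCons x u)) := by
  have swap_cons : vecCons y (vecCons x u) ∘ Equiv.swap 0 1 = vecCons x (vecCons y u) := by
    ext i
    refine i.cases (by simp) fun i => i.cases (by simp) fun i => ?_
    rw [Function.comp_apply, Equiv.swap_apply_of_ne_of_ne] <;> simp [Fin.ext_iff]
  rw [← swap_cons, f.map_swap _ Fin.zero_ne_one]

theorem detRowAlternating_three_term {m : ℕ} (u : Fin m → Fin (m + 2) → R)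
    (x y z w : Fin (m + 2) → R) :
    detRowAlternating (vecCons x (vecCons z u)) * detRowAlternating (vecCons y (vecCons w u)) =
      detRowAlternating (vecCons x (vecCons y u)) * detRowAlternating (vecCons z (vecCons w u)) +
        detRowAlternating (vecCons x (vecCons w u)) *
          detRowAlternating (vecCons y (vecCons z u)) := by
  let M : Matrix (Fin (m + 2)) (Fin (m + 2)) R := vecCons y (vecCons z u)
  have update_one (a b c : Fin (m + 2) → R) :
      Function.update (vecCons a (vecCons b u)) 1 c = vecCons a (vecCons c u) :=
    (Fin.cons_update (i := 0) ..).symm.trans (congrArg _ (Fin.update_cons_zero ..))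
  let φ := detRowAlternating.toMultilinearMap.toLinearMap (vecCons x (vecCons y u)) 1
  have φ_apply (p : Fin (m + 2) → R) : φ p = detRowAlternating (vecCons x (vecCons p u)) :=
    congrArg detRowAlternating (update_one x y p)
  have φ_eq_zero (i : Fin m) : φ (M i.succ.succ) = 0 := by
    rw [φ_apply]
    exact detRowAlternating.map_eq_zero_of_eq _ (i := 1) (j := i.succ.succ) rfl
      (by simp [Fin.ext_iff])
  have det_update_zero :
      (M.updateRow 0 w).det = -detRowAlternating (vecCons z (vecCons w u)) :=
    (congrArg detRowAlternating (Fin.update_cons_zero ..)).trans (map_vecCons_vecCons_swap ..)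
  have det_update_one : (M.updateRow 1 w).det = detRowAlternating (vecCons y (vecCons w u)) :=
    congrArg detRowAlternating (update_one y z w)
  have expand : detRowAlternating (vecCons y (vecCons z u)) * φ w =
      (M.updateRow 0 w).det * φ y + (M.updateRow 1 w).det * φ z := by
    have cramer := congrArg φ (det_smul_eq_sum_det_updateRow_smul M w)
    rw [Fin.sum_univ_succ, Fin.sum_univ_succ] at cramer
    simpa only [map_smul, map_add, map_sum, φ_eq_zero, smul_eq_mul, mul_zero, sum_const_zero,
      add_zero] using! cramer
  rw [det_update_zero, det_update_one, φ_apply, φ_apply, φ_apply] at expand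
  linear_combination -expand

variable [LinearOrder ι]

theorem exists_orderEmbOfFin_insert_eq_insertNth {I : Finset ι} {x : ι} (hx : x ∉ I) :
    ∃ p : Fin (#I + 1), (p : ℕ) = #{i ∈ I | i < x} ∧
      ⇑((insert x I).orderEmbOfFin (card_insert_of_notMem hx)) =
        p.insertNth x (I.orderEmbOfFin rfl) := by
  set e := (insert x I).orderEmbOfFin (card_insert_of_notMem hx) with he
  have range_e : Set.range e = insert x I := by simp [he]
  obtain ⟨p, hp⟩ : x ∈ Set.range e := by simp [range_e]
  have mem_insert_iff (i : ι) : i ∈ insert x I ↔ ∃ q, e q = i := by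
    rw [← Set.mem_range, range_e]; simp
  refine ⟨p, ?_, ?_⟩
  · rw [← Fin.card_Iio, ← card_map e.toEmbedding]
    congr 1
    ext i
    simp only [mem_map, mem_Iio, mem_filter, RelEmbedding.coe_toEmbedding]
    constructor
    · rintro ⟨q, hq, rfl⟩
      have := hp ▸ e.strictMono hq
      exact ⟨mem_of_mem_insert_of_ne ((mem_insert_iff _).2 ⟨q, rfl⟩) this.ne, this⟩
    · rintro ⟨hi, hix⟩
      obtain ⟨q, rfl⟩ := (mem_insert_iff i).1 (mem_insert_of_mem hi)
      exact ⟨q, e.lt_iff_lt.1 (hp ▸ hix), rfl⟩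
  · rw [← hp, ← Fin.insertNth_self_removeNth p e]
    congr 1
    · simp
    refine orderEmbOfFin_unique _ (fun i => ?_) (e.strictMono.comp (Fin.strictMono_succAbove p))
    refine mem_of_mem_insert_of_ne ((mem_insert_iff _).2 ⟨_, rfl⟩) ?_
    simp [← hp, Fin.removeNth]

/-- The determinant whose rows are the vectors `v j` for `j ∈ J`, taken in increasing order of `j`;
it is `0` if `J` does not have exactly `r` elements. -/
noncomputable def sortedDet {r : ℕ} (v : ι → Fin r → R) (J : Finset ι) : R :=
  if h : #J = r then detRowAlternating (v ∘ J.orderEmbOfFin h) else 0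

theorem map_orderEmbOfFin_insert {M N : Type*} [AddCommGroup M] [AddCommGroup N] [Module R M]
    [Module R N] {m : ℕ} (f : M [⋀^Fin (m + 1)]→ₗ[R] N) (v : ι → M) {I : Finset ι} (hI : #I = m)
    {x : ι} (hx : x ∉ I) (hxI : #(insert x I) = m + 1) :
    f (v ∘ (insert x I).orderEmbOfFin hxI) =
      (-1) ^ #{i ∈ I | i < x} • f (vecCons (v x) (v ∘ I.orderEmbOfFin hI)) := by
  subst hI
  obtain ⟨p, hp, he⟩ := exists_orderEmbOfFin_insert_eq_insertNth hx
  have comp_insert : v ∘ p.insertNth x (I.orderEmbOfFin rfl) =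
      p.insertNth (v x) (v ∘ I.orderEmbOfFin rfl) := by
    ext i
    refine p.succAboveCases ?_ (fun j => ?_) i <;> simp
  rw [he, comp_insert, f.map_insertNth, hp]

theorem sortedDet_insert_insert {I : Finset ι} (v : ι → Fin (#I + 2) → R) {x y : ι} (hx : x ∉ I)
    (hy : y ∉ I) (hxy : x < y) :
    sortedDet v (insert x (insert y I)) =
      (-1) ^ #{i ∈ I | i < x} * (-1) ^ #{i ∈ I | i < y} *
        detRowAlternating (vecCons (v x) (vecCons (v y) (v ∘ I.orderEmbOfFin rfl))) := by
  have card_y : #(insert y I) = #I + 1 := card_insert_of_notMem hy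
  have hx' : x ∉ insert y I := by simp [hx, hxy.ne]
  have card_xy : #(insert x (insert y I)) = #I + 2 := by rw [card_insert_of_notMem hx', card_y]
  rw [sortedDet, dif_pos card_xy, map_orderEmbOfFin_insert _ v card_y hx',
    ← AlternatingMap.curryLeft_apply_apply, map_orderEmbOfFin_insert _ v rfl hy,
    AlternatingMap.curryLeft_apply_apply, filter_insert, if_neg hxy.not_gt, smul_smul]
  simp

/-- The three-term Plücker relation for a function `p` of finite sets, with common part `K`. -/
def ThreeTerm {ι R : Type*} [DecidableEq ι] [Add R] [Mul R] (p : Finset ι → R) (K : Finset ι)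
    (x y z w : ι) : Prop :=
  p (insert x (insert z K)) * p (insert y (insert w K)) =
    p (insert x (insert y K)) * p (insert z (insert w K)) +
      p (insert x (insert w K)) * p (insert y (insert z K))

theorem ThreeTerm.rotate {ι : Type*} [DecidableEq ι] {p : Finset ι → R} {K : Finset ι}
    {x y z w : ι} (h : ThreeTerm p K x y z w) : ThreeTerm p K y z w x := by
  unfold ThreeTerm at h ⊢
  rw [insert_comm z x, insert_comm w x, insert_comm y x]
  linear_combination h

theorem sortedDet_threeTerm {r : ℕ} (v : ι → Fin r → R) {K : Finset ι} {x y z w : ι} (hx : x ∉ K)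
    (hy : y ∉ K) (hz : z ∉ K) (hw : w ∉ K) (hxy : x < y) (hyz : y < z) (hzw : z < w) :
    ThreeTerm (sortedDet v) K x y z w := by
  unfold ThreeTerm
  by_cases hr : #K + 2 = r
  · subst hr
    rw [sortedDet_insert_insert v hx hz (hxy.trans hyz),
      sortedDet_insert_insert v hy hw (hyz.trans hzw), sortedDet_insert_insert v hx hy hxy,
      sortedDet_insert_insert v hz hw hzw,
      sortedDet_insert_insert v hx hw (hxy.trans (hyz.trans hzw)),
      sortedDet_insert_insert v hy hz hyz]
    linear_combination ((-1) ^ #{i ∈ K | i < x} * (-1) ^ #{i ∈ K | i < y} *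
      (-1) ^ #{i ∈ K | i < z} * (-1) ^ #{i ∈ K | i < w}) *
        detRowAlternating_three_term (v ∘ K.orderEmbOfFin rfl) (v x) (v y) (v z) (v w)
  · have eq_zero {a b : ι} (ha : a ∉ K) (hb : b ∉ K) (hab : a < b) :
        sortedDet v (insert a (insert b K)) = 0 := by
      refine dif_neg fun h => hr ?_
      rwa [card_insert_of_notMem (by simp [ha, hab.ne]), card_insert_of_notMem hb] at h
    simp only [eq_zero hx hy hxy, eq_zero hx hz (hxy.trans hyz),
      eq_zero hx hw (hxy.trans (hyz.trans hzw)), zero_mul, add_zero]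

end SortedDet

section CyclicPlucker

variable {n r : ℕ} (A : Matrix (Fin r) (ZMod n) ℂ)

theorem plucker_eq_sortedDet (J : Finset (ZMod n)) :
    plucker n r A J =
      sortedDet (fun t : ℕ => A.transpose (t + 1)) (J.image fun x => (x - 1).val) := by
  unfold plucker sortedDet
  split_ifs
  · rw [← Matrix.det_transpose]; rfl
  · rfl

theorem val_sub_one_injective [NeZero n] : Function.Injective fun x : ZMod n => (x - 1).val :=
  (ZMod.val_injective n).comp sub_left_injective

theorem plucker_threeTerm_of_val_lt [NeZero n] {K : Finset (ZMod n)} {x y z w : ZMod n} (hx : x ∉ K)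
    (hy : y ∉ K) (hz : z ∉ K) (hw : w ∉ K) (hxy : (x - 1).val < (y - 1).val)
    (hyz : (y - 1).val < (z - 1).val) (hzw : (z - 1).val < (w - 1).val) :
    ThreeTerm (plucker n r A) K x y z w := by
  have notMem_image {a : ZMod n} (ha : a ∉ K) : (a - 1).val ∉ K.image fun x => (x - 1).val :=
    fun h => ha ((val_sub_one_injective.mem_finset_image (s := K) (a := a)).1 h)
  simpa only [ThreeTerm, plucker_eq_sortedDet, image_insert] using
    sortedDet_threeTerm (fun t : ℕ => A.transpose (t + 1)) (notMem_image hx) (notMem_image hy)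
      (notMem_image hz) (notMem_image hw) hxy hyz hzw

theorem plucker_threeTerm_of_lt {K : Finset (ZMod n)} {x y z w : ℤ} (hx : (x : ZMod n) ∉ K)
    (hy : (y : ZMod n) ∉ K) (hz : (z : ZMod n) ∉ K) (hw : (w : ZMod n) ∉ K) (hxy : x < y)
    (hyz : y < z) (hzw : z < w) (hwx : w < x + n) :
    ThreeTerm (plucker n r A) K x y z w := by
  have hn : (0 : ℤ) < n := by omega
  have : NeZero n := ⟨by omega⟩
  let q (t : ℤ) : ℤ := (t - 1) / n
  have q_mono {s t : ℤ} (hst : s < t) : q s ≤ q t :=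
    Int.ediv_le_ediv hn (by omega)
  have q_le : q w ≤ q x + 1 := by
    refine (q_mono hwx).trans_eq ?_
    simp only [q, add_sub_right_comm, Int.add_ediv_of_dvd_right (dvd_refl (n : ℤ)),
      Int.ediv_self hn.ne']
  have val_eq (t : ℤ) : (((t : ZMod n) - 1).val : ℤ) = t - 1 - n * q t := by
    rw [← Int.cast_one, ← Int.cast_sub, ZMod.val_intCast, Int.emod_def]
  have val_lt {s t : ℤ} (hst : s < t) (hq : q s = q t) :
      ((s : ZMod n) - 1).val < ((t : ZMod n) - 1).val := by
    zify; rw [val_eq, val_eq, hq]; omega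
  have val_gt {s t : ℤ} (hst : t < s + n) (hq : q t = q s + 1) :
      ((t : ZMod n) - 1).val < ((s : ZMod n) - 1).val := by
    zify; rw [val_eq, val_eq, hq]; linarith
  have hqy := q_mono hxy
  have hqz := q_mono hyz
  have hqw := q_mono hzw
  by_cases hw' : q w = q x
  · exact plucker_threeTerm_of_val_lt A hx hy hz hw (val_lt hxy (by omega))
      (val_lt hyz (by omega)) (val_lt hzw (by omega))
  by_cases hz' : q z = q x
  · exact (plucker_threeTerm_of_val_lt A hw hx hy hz (val_gt hwx (by omega))
      (val_lt hxy (by omega)) (val_lt hyz (by omega))).rotate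
  by_cases hy' : q y = q x
  · exact (plucker_threeTerm_of_val_lt A hz hw hx hy (val_lt hzw (by omega))
      (val_gt hwx (by omega)) (val_lt hxy (by omega))).rotate.rotate
  · exact (plucker_threeTerm_of_val_lt A hy hz hw hx (val_lt hyz (by omega))
      (val_lt hzw (by omega)) (val_gt hwx (by omega))).rotate.rotate.rotate

theorem intCast_mem_image_iff {S : Finset ℤ} {ℓ t : ℤ} (hS : S ⊆ Ico ℓ (ℓ + n))
    (ht : t ∈ Ico ℓ (ℓ + n)) : (t : ZMod n) ∈ S.image Int.cast ↔ t ∈ S := by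
  refine ⟨fun h => ?_, mem_image_of_mem _⟩
  obtain ⟨s, hs, hst⟩ := mem_image.1 h
  have hs' := mem_Ico.1 (hS hs)
  have ht' := mem_Ico.1 ht
  have := Int.eq_zero_of_abs_lt_dvd ((ZMod.intCast_eq_intCast_iff_dvd_sub s t n).1 hst)
    (by rw [abs_lt]; omega)
  rwa [show t = s by omega]

/-- The factor by which the Plücker coordinate of `J` changes when its element `m` is replaced by
`m + 1`. -/
noncomputable def shiftRatio (J : Finset (ZMod n)) (m : ZMod n) : ℂ :=
  plucker n r A (insert (m + 1) (J.erase m)) / plucker n r A J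

theorem shiftRatio_image_insert {S : Finset ℤ} {ℓ m : ℤ} (hS : S ⊆ Ico ℓ (ℓ + n))
    (hm : m ∈ Ico ℓ (ℓ + n)) (hmS : m ∉ S) :
    shiftRatio A ((insert m S).image Int.cast) m =
      plucker n r A ((insert (m + 1) S).image Int.cast) /
        plucker n r A ((insert m S).image Int.cast) := by
  rw [shiftRatio, image_insert, erase_insert ((intCast_mem_image_iff hS hm).not.2 hmS),
    image_insert, Int.cast_add, Int.cast_one]

theorem shiftRatio_sub_shiftRatio {K : Finset ℤ} {ℓ x y m : ℤ} (hK : K ⊆ Ico ℓ (ℓ + n))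
    (hℓx : ℓ ≤ x) (hxy : x < y) (hym : y < m) (hmℓ : m + 1 < ℓ + n) (hxK : x ∉ K) (hyK : y ∉ K)
    (hmK : m ∉ K) (hmK' : m + 1 ∉ K)
    (hx : plucker n r A ((insert x (insert m K)).image Int.cast) ≠ 0)
    (hy : plucker n r A ((insert y (insert m K)).image Int.cast) ≠ 0) :
    shiftRatio A ((insert y (insert m K)).image Int.cast) m -
        shiftRatio A ((insert x (insert m K)).image Int.cast) m =
      plucker n r A ((insert x (insert y K)).image Int.cast) *
          plucker n r A ((insert m (insert (m + 1) K)).image Int.cast) /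
        (plucker n r A ((insert y (insert m K)).image Int.cast) *
          plucker n r A ((insert x (insert m K)).image Int.cast)) := by
  have notMem_image {t : ℤ} (ht : t ∈ Ico ℓ (ℓ + n)) (htK : t ∉ K) :
      (t : ZMod n) ∉ K.image Int.cast := (intCast_mem_image_iff hK ht).not.2 htK
  have three_term : ThreeTerm (plucker n r A) (K.image Int.cast) x y m (m + 1 : ℤ) :=
    plucker_threeTerm_of_lt A (notMem_image (by grind) hxK) (notMem_image (by grind) hyK)
      (notMem_image (by grind) hmK) (notMem_image (by grind) hmK') hxy hym (by omega) (by omega)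
  have ratio_eq {t : ℤ} (ht : t ∈ Ico ℓ (ℓ + n)) (htm : t ≠ m) :
      shiftRatio A ((insert t (insert m K)).image Int.cast) m =
        plucker n r A ((insert t (insert (m + 1) K)).image Int.cast) /
          plucker n r A ((insert t (insert m K)).image Int.cast) := by
    rw [insert_comm t m, insert_comm t (m + 1)]
    exact shiftRatio_image_insert A (ℓ := ℓ) (by grind) (by grind) (by grind)
  rw [ratio_eq (by grind) hym.ne, ratio_eq (by grind) (hxy.trans hym).ne, div_sub_div _ _ hy hx]
  congr 1
  simp only [ThreeTerm, ← image_insert] at three_term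
  linear_combination three_term

end CyclicPlucker

section CheckboardLabels

theorem seg_eq_image_intCast (n m : ℕ) : seg n m = (Icc 1 (m : ℤ)).image Int.cast := by
  ext z
  simp only [seg, mem_image, mem_Icc]
  refine ⟨fun ⟨t, ht, htz⟩ => ⟨t, by omega, by simpa using htz⟩, fun ⟨t, ht, htz⟩ => ?_⟩
  exact ⟨t.toNat, by omega, by rw [← htz, ← Int.cast_natCast, Int.toNat_of_nonneg (by omega)]⟩

theorem seg_sdiff_seg {n p q : ℕ} (hp : p ≤ n) (hq : q ≤ n) :
    seg n p \ seg n q = (Icc (q + 1 : ℤ) p).image Int.cast := by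
  have mem_seg_iff {t : ℤ} (ht : 0 < t) (htn : t ≤ n) : (t : ZMod n) ∈ seg n q ↔ t ≤ q := by
    rw [seg_eq_image_intCast, intCast_mem_image_iff (ℓ := 1) (by grind) (by grind), mem_Icc]
    omega
  ext z
  rw [mem_sdiff, seg_eq_image_intCast n p]
  constructor
  · rintro ⟨hzp, hzq⟩
    obtain ⟨t, ht, rfl⟩ := mem_image.1 hzp
    rw [mem_Icc] at ht
    rw [mem_seg_iff (by omega) (by omega)] at hzq
    exact mem_image_of_mem _ (mem_Icc.2 (by omega))
  · intro hz
    obtain ⟨t, ht, rfl⟩ := mem_image.1 hz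
    rw [mem_Icc] at ht
    rw [mem_seg_iff (by omega) (by omega)]
    exact ⟨mem_image_of_mem _ (mem_Icc.2 (by omega)), by omega⟩

theorem Jch_eq_image {k n i j : ℕ} {s : ℤ} {S : Finset ℤ} (hkn : k ≤ n) (hi : i ≤ n - k)
    (hj : j ≤ k) (hs : s = ((i + j + 1) / 2 : ℕ))
    (hS : ∀ t, t ∈ S ↔ (1 - s ≤ t ∧ t ≤ i - s) ∨ (i + j - s < t ∧ t ≤ n - k + j - s)) :
    Jch k n i j = S.image Int.cast := by
  have S_eq : S = (Icc 1 (i : ℤ) ∪ Icc ((i + j : ℕ) + 1 : ℤ) (n - k + j : ℕ)).image (· - s) := by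
    ext t
    simp only [hS, mem_image, mem_union, mem_Icc]
    exact ⟨fun h => ⟨t + s, by omega, by omega⟩, by rintro ⟨u, hu, rfl⟩; omega⟩
  rw [Jch, seg_eq_image_intCast, seg_sdiff_seg (by omega) (by omega), ← image_union, S_eq,
    image_image, image_image]
  congr 1
  ext t
  simp only [hs, Function.comp_apply, Int.cast_sub, Int.cast_natCast]

theorem Jcyc_intCast_eq_image (n k : ℕ) (i : ℤ) :
    Jcyc n k i = (Icc (i + 1) (i + (n - k : ℕ))).image Int.cast := by
  have Jcyc_eq : Jcyc n k i = (seg n (n - k)).image ((i : ZMod n) + ·) := by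
    rw [Jcyc, seg, image_image]; rfl
  rw [Jcyc_eq, seg_eq_image_intCast, ← image_add_left_Icc, image_image, image_image]
  congr 1
  ext t
  simp only [Function.comp_apply, Int.cast_add]

theorem plucker_Jplus_div_plucker_Jcyc {n k : ℕ} (A : Matrix (Fin (n - k)) (ZMod n) ℂ)
    (i : ZMod n) :
    plucker n (n - k) A (Jplus n k i) / plucker n (n - k) A (Jcyc n k i) =
      shiftRatio A (Jcyc n k i) (i + (n - k : ℕ)) := by
  rw [shiftRatio, Jplus, Nat.cast_add, Nat.cast_one, add_assoc]

end CheckboardLabels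

section UpwardDiagonal

variable {k n : ℕ} (A : Matrix (Fin (n - k)) (ZMod n) ℂ) {a b : ℕ} {c : ℤ}

theorem sumA_summand_eq_shiftRatio_sub (ha : a + 1 < n - k) (hb : 1 ≤ b) (hbk : b < k)
    (hab : (a : ℤ) - b = 2 * c - 1) (hy : ych k n A a b ≠ 0) (hy' : ych k n A (a + 1) b ≠ 0) :
    ych k n A a (b + 1) * ych k n A (a + 1) (b - 1) / (ych k n A a b * ych k n A (a + 1) b) =
      shiftRatio A (Jch k n a b) (n - k - c : ℤ) -
        shiftRatio A (Jch k n (a + 1) b) (n - k - c : ℤ) := by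
  obtain ⟨K, mem_K⟩ : ∃ K : Finset ℤ, ∀ t, t ∈ K ↔
      1 - (b + c) ≤ t ∧ t ≤ c - 1 ∨ b + c + 1 ≤ t ∧ t ≤ n - k - c - 1 :=
    ⟨Icc (1 - (b + c)) (c - 1) ∪ Icc (b + c + 1) (n - k - c - 1), by simp⟩
  have Jch_a_b : Jch k n a b = (insert (b + c) (insert (n - k - c) K)).image Int.cast :=
    Jch_eq_image (s := b + c) (by omega) (by omega) (by omega) (by omega)
      (by simp only [mem_insert, mem_K]; omega)
  have Jch_succ_b : Jch k n (a + 1) b = (insert c (insert (n - k - c) K)).image Int.cast :=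
    Jch_eq_image (s := b + c) (by omega) (by omega) (by omega) (by omega)
      (by simp only [mem_insert, mem_K]; omega)
  have Jch_a_succ : Jch k n a (b + 1) =
      (insert (n - k - c) (insert (n - k - c + 1) K)).image Int.cast :=
    Jch_eq_image (s := b + c) (by omega) (by omega) (by omega) (by omega)
      (by simp only [mem_insert, mem_K]; omega)
  have Jch_succ_pred : Jch k n (a + 1) (b - 1) = (insert c (insert (b + c) K)).image Int.cast :=
    Jch_eq_image (s := b + c) (by omega) (by omega) (by omega) (by omega)
      (by simp only [mem_insert, mem_K]; omega)
  have K_subset : K ⊆ Ico (1 - (b + c)) (1 - (b + c) + n) := fun t ht => by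
    rw [mem_K] at ht; rw [mem_Ico]; omega
  simp only [ych, Jch_a_b, Jch_succ_b, Jch_a_succ, Jch_succ_pred] at hy hy' ⊢
  rw [shiftRatio_sub_shiftRatio A K_subset (by omega) (by omega) (by omega) (by omega)
    (by rw [mem_K]; omega) (by rw [mem_K]; omega) (by rw [mem_K]; omega) (by rw [mem_K]; omega)
    hy' hy]
  ring

theorem sumA_summand_eq_shiftRatio_of_succ_left_eq (ha : a + 1 = n - k) (hbk : b < k)
    (hab : (a : ℤ) - b = 2 * c - 1) (hy : ych k n A (a + 1) b ≠ 0) :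
    ych k n A a (b + 1) * ych k n A (a + 1) (b - 1) / (ych k n A a b * ych k n A (a + 1) b) =
      shiftRatio A (Jch k n a b) (n - k - c : ℤ) := by
  obtain ⟨K, mem_K⟩ : ∃ K : Finset ℤ, ∀ t, t ∈ K ↔ 1 - (b + c) ≤ t ∧ t ≤ c - 1 :=
    ⟨Icc (1 - (b + c)) (c - 1), by simp⟩
  have Jch_a_b : Jch k n a b = (insert (n - k - c) K).image Int.cast :=
    Jch_eq_image (s := b + c) (by omega) (by omega) (by omega) (by omega)
      (by simp only [mem_insert, mem_K]; omega)
  have Jch_a_succ : Jch k n a (b + 1) = (insert (n - k - c + 1) K).image Int.cast :=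
    Jch_eq_image (s := b + c) (by omega) (by omega) (by omega) (by omega)
      (by simp only [mem_insert, mem_K]; omega)
  have Jch_succ_pred : Jch k n (a + 1) (b - 1) = Jch k n (a + 1) b := by
    rw [Jch_eq_image (s := b + c) (S := insert c K),
      Jch_eq_image (s := b + c) (S := insert c K)] <;>
    first | omega | simp only [mem_insert, mem_K]; omega
  have K_subset : K ⊆ Ico (1 - (b + c)) (1 - (b + c) + n) := fun t ht => by
    rw [mem_K] at ht; rw [mem_Ico]; omega
  rw [Jch_a_b, shiftRatio_image_insert A K_subset (by rw [mem_Ico]; omega) (by rw [mem_K]; omega),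
    ← Jch_a_b, ← Jch_a_succ]
  simp only [ych, Jch_succ_pred] at hy ⊢
  exact mul_div_mul_right _ _ hy

theorem sumB_summand_eq_shiftRatio_sub (ha : 1 ≤ a) (han : a < n - k) (hb : 1 ≤ b) (hbk : b < k)
    (hab : (a : ℤ) - b = 2 * c - 1) (hy : ych k n A a (b - 1) ≠ 0) (hy' : ych k n A a b ≠ 0) :
    ych k n A (a - 1) b * ych k n A (a + 1) (b - 1) / (ych k n A a (b - 1) * ych k n A a b) =
      shiftRatio A (Jch k n a (b - 1)) (n - k - c : ℤ) -
        shiftRatio A (Jch k n a b) (n - k - c : ℤ) := by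
  obtain ⟨K, mem_K⟩ : ∃ K : Finset ℤ, ∀ t, t ∈ K ↔
      2 - (b + c) ≤ t ∧ t ≤ c - 1 ∨ b + c ≤ t ∧ t ≤ n - k - c - 1 :=
    ⟨Icc (2 - (b + c)) (c - 1) ∪ Icc (b + c) (n - k - c - 1), by simp⟩
  have Jch_a_pred : Jch k n a (b - 1) = (insert c (insert (n - k - c) K)).image Int.cast :=
    Jch_eq_image (s := b + c - 1) (by omega) (by omega) (by omega) (by omega)
      (by simp only [mem_insert, mem_K]; omega)
  have Jch_a_b : Jch k n a b = (insert (1 - (b + c)) (insert (n - k - c) K)).image Int.cast :=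
    Jch_eq_image (s := b + c) (by omega) (by omega) (by omega) (by omega)
      (by simp only [mem_insert, mem_K]; omega)
  have Jch_pred_b : Jch k n (a - 1) b =
      (insert (n - k - c) (insert (n - k - c + 1) K)).image Int.cast :=
    Jch_eq_image (s := b + c - 1) (by omega) (by omega) (by omega) (by omega)
      (by simp only [mem_insert, mem_K]; omega)
  have Jch_succ_pred : Jch k n (a + 1) (b - 1) =
      (insert (1 - (b + c)) (insert c K)).image Int.cast :=
    Jch_eq_image (s := b + c) (by omega) (by omega) (by omega) (by omega)
      (by simp only [mem_insert, mem_K]; omega)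
  have K_subset : K ⊆ Ico (1 - (b + c)) (1 - (b + c) + n) := fun t ht => by
    rw [mem_K] at ht; rw [mem_Ico]; omega
  simp only [ych, Jch_a_pred, Jch_a_b, Jch_pred_b, Jch_succ_pred] at hy hy' ⊢
  rw [shiftRatio_sub_shiftRatio A K_subset (by omega) (by omega) (by omega) (by omega)
    (by rw [mem_K]; omega) (by rw [mem_K]; omega) (by rw [mem_K]; omega) (by rw [mem_K]; omega)
    hy' hy]
  ring

theorem sumB_summand_eq_shiftRatio_of_right_eq (ha : 1 ≤ a) (han : a < n - k) (hk : 1 ≤ k)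
    (hak : (a : ℤ) - k = 2 * c - 1) (hy : ych k n A a k ≠ 0) :
    ych k n A (a - 1) k * ych k n A (a + 1) (k - 1) / (ych k n A a (k - 1) * ych k n A a k) =
      shiftRatio A (Jch k n a (k - 1)) (n - k - c : ℤ) := by
  have cast_eq : ((n - k - c + 1 : ℤ) : ZMod n) = ((1 - (k + c) : ℤ) : ZMod n) := by
    push_cast; rw [CharP.cast_eq_zero]; ring
  obtain ⟨K, mem_K⟩ : ∃ K : Finset ℤ, ∀ t, t ∈ K ↔
      2 - (k + c) ≤ t ∧ t ≤ c ∨ k + c ≤ t ∧ t ≤ n - k - c - 1 :=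
    ⟨Icc (2 - (k + c)) c ∪ Icc (k + c) (n - k - c - 1), by simp⟩
  have Jch_a_pred : Jch k n a (k - 1) = (insert (n - k - c) K).image Int.cast :=
    Jch_eq_image (s := k + c - 1) (by omega) (by omega) (by omega) (by omega)
      (by simp only [mem_insert, mem_K]; omega)
  have Jch_succ_pred : Jch k n (a + 1) (k - 1) = (insert (n - k - c + 1) K).image Int.cast := by
    rw [image_insert, cast_eq, ← image_insert]
    exact Jch_eq_image (s := k + c) (by omega) (by omega) (by omega) (by omega)
      (by simp only [mem_insert, mem_K]; omega)
  have Jch_pred_k : Jch k n (a - 1) k = Jch k n a k := by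
    let L : Finset ℤ := Icc (2 - (k + c)) (c - 1) ∪ Icc (k + c) (n - k - c)
    rw [Jch_eq_image (s := k + c - 1) (S := insert (n - k - c + 1) L), image_insert, cast_eq,
      ← image_insert, Jch_eq_image (s := k + c) (S := insert (1 - (k + c)) L)] <;>
    first | omega | simp only [L, mem_insert, mem_union, mem_Icc]; omega
  have K_subset : K ⊆ Ico (1 - (k + c)) (1 - (k + c) + n) := fun t ht => by
    rw [mem_K] at ht; rw [mem_Ico]; omega
  rw [Jch_a_pred, shiftRatio_image_insert A K_subset (by rw [mem_Ico]; omega)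
    (by rw [mem_K]; omega), ← Jch_a_pred, ← Jch_succ_pred]
  simp only [ych, Jch_pred_k, mul_comm (plucker _ _ A (Jch k n a k))] at hy ⊢
  exact mul_div_mul_right _ _ hy

/-- The potential along the zigzag path: `shiftRatio` of the checkboard label `J^ch_{i,j}` at
`m = n - k - c`, the right end of its second block on the diagonals `i - j = 2c - 1, 2c`. It is cut
off to `0` on the boundary `i = n - k` or `j = k`, where the path ends. -/
noncomputable def labelRatio (c : ℤ) (i j : ℕ) : ℂ :=
  if i < n - k ∧ j < k then shiftRatio A (Jch k n i j) (n - k - c : ℤ) else 0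

variable {A}

theorem sumA_summand_eq_labelRatio_sub (hy : ∀ i ≤ n - k, ∀ j ≤ k, ych k n A i j ≠ 0)
    (ha : a < n - k) (hb : 1 ≤ b) (hbk : b < k) (hab : (a : ℤ) - b = 2 * c - 1) :
    ych k n A a (b + 1) * ych k n A (a + 1) (b - 1) / (ych k n A a b * ych k n A (a + 1) b) =
      labelRatio A c a b - labelRatio A c (a + 1) b := by
  rw [labelRatio, labelRatio, if_pos ⟨ha, hbk⟩]
  rcases (Nat.succ_le_of_lt ha).lt_or_eq with ha' | ha'
  · rw [if_pos ⟨ha', hbk⟩]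
    exact sumA_summand_eq_shiftRatio_sub A ha' hb hbk hab (hy _ (by omega) _ (by omega))
      (hy _ (by omega) _ (by omega))
  · rw [if_neg (by omega), sub_zero]
    exact sumA_summand_eq_shiftRatio_of_succ_left_eq A ha' hbk hab (hy _ (by omega) _ (by omega))

theorem sumB_summand_eq_labelRatio_sub (hy : ∀ i ≤ n - k, ∀ j ≤ k, ych k n A i j ≠ 0)
    (ha : 1 ≤ a) (han : a < n - k) (hb : 1 ≤ b) (hbk : b ≤ k) (hab : (a : ℤ) - b = 2 * c - 1) :
    ych k n A (a - 1) b * ych k n A (a + 1) (b - 1) / (ych k n A a (b - 1) * ych k n A a b) =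
      labelRatio A c a (b - 1) - labelRatio A c a b := by
  rw [labelRatio, labelRatio, if_pos (by omega)]
  rcases hbk.lt_or_eq with hbk' | rfl
  · rw [if_pos ⟨han, hbk'⟩]
    exact sumB_summand_eq_shiftRatio_sub A ha han hb hbk' hab (hy _ (by omega) _ (by omega))
      (hy _ (by omega) _ (by omega))
  · rw [if_neg (by omega), sub_zero]
    exact sumB_summand_eq_shiftRatio_of_right_eq A ha han hb hab (hy _ (by omega) _ le_rfl)

end UpwardDiagonal

section Telescoping

theorem sum_filter_sub_eq {M : Type*} [AddCommMonoid M] {S : Finset (ℕ × ℕ)} {d : ℤ} {a b N : ℕ}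
    (f : ℕ → ℕ → M) (hab : (a : ℤ) - b = d)
    (hS : ∀ p ∈ S, (p.1 : ℤ) - p.2 = d → a ≤ p.1 ∧ p.1 < a + N)
    (hf : ∀ t, (a + t, b + t) ∉ S → f (a + t) (b + t) = 0) :
    ∑ p ∈ S with (p.1 : ℤ) - p.2 = d, f p.1 p.2 = ∑ t ∈ range N, f (a + t) (b + t) := by
  have injOn : Set.InjOn (fun t => (a + t, b + t)) (range N : Set ℕ) := by
    intro s _ t _ hst
    simpa using congrArg Prod.fst hst
  rw [← sum_image (f := fun p : ℕ × ℕ => f p.1 p.2) injOn]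
  refine sum_subset (fun p hp => ?_) fun p hp hpS => ?_
  · rw [mem_filter] at hp
    have := hS p hp.1 hp.2
    exact mem_image.2 ⟨p.1 - a, mem_range.2 (by omega), Prod.ext (by grind) (by grind)⟩
  · obtain ⟨t, -, rfl⟩ := mem_image.1 hp
    exact hf t fun h => hpS (mem_filter.2 ⟨h, by push_cast; omega⟩)

variable {k n : ℕ} {A : Matrix (Fin (n - k)) (ZMod n) ℂ} {a b : ℕ} {c : ℤ}

theorem labelRatio_eq_zero (h : n - k ≤ a ∨ k ≤ b) : labelRatio A c a b = 0 :=
  if_neg (by omega)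

theorem sumA_eq_sum_range (hy : ∀ i ≤ n - k, ∀ j ≤ k, ych k n A i j ≠ 0)
    (hab : (a : ℤ) - b = 2 * c - 1) (hstart : a = 0 ∨ b = 1) :
    sumA k n (ych k n A) (2 * c - 1) =
      ∑ t ∈ range (n - k),
        (labelRatio A c (a + t) (b + t) - labelRatio A c (a + t + 1) (b + t)) := by
  rw [← sum_filter_sub_eq (S := range (n - k) ×ˢ Icc 1 (k - 1))
    (fun i j => labelRatio A c i j - labelRatio A c (i + 1) j) hab]
  · refine sum_congr rfl fun p hp => ?_
    simp only [mem_filter, mem_product, mem_range, mem_Icc] at hp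
    exact sumA_summand_eq_labelRatio_sub hy (by omega) (by omega) (by omega) hp.2
  · simp only [mem_product, mem_range, mem_Icc]
    omega
  · intro t ht
    simp only [mem_product, mem_range, mem_Icc] at ht
    rw [labelRatio_eq_zero (by omega), labelRatio_eq_zero (by omega), sub_zero]

theorem sumB_eq_sum_range (hy : ∀ i ≤ n - k, ∀ j ≤ k, ych k n A i j ≠ 0)
    (hab : (a : ℤ) - b = 2 * c) (ha : 1 ≤ a) (hstart : a = 1 ∨ b = 0) :
    sumB k n (ych k n A) (2 * c - 1) =
      ∑ t ∈ range (n - k),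
        (labelRatio A c (a + t) (b + t) - labelRatio A c (a + t) (b + t + 1)) := by
  rw [sum_congr rfl fun t _ => by rw [add_right_comm b t 1, show b + t = b + 1 + t - 1 by omega]]
  rw [← sum_filter_sub_eq (S := Icc 1 (n - k - 1) ×ˢ Icc 1 k) (b := b + 1)
    (d := 2 * c - 1) (fun i j => labelRatio A c i (j - 1) - labelRatio A c i j) (by omega)]
  · refine sum_congr rfl fun p hp => ?_
    simp only [mem_filter, mem_product, mem_Icc] at hp
    exact sumB_summand_eq_labelRatio_sub hy (by omega) (by omega) (by omega) (by omega) hp.2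
  · simp only [mem_product, mem_Icc]
    omega
  · intro t ht
    simp only [mem_product, mem_Icc] at ht
    rw [labelRatio_eq_zero (by omega), labelRatio_eq_zero (by omega), sub_zero]

theorem sumA_add_sumB_eq_labelRatio (hy : ∀ i ≤ n - k, ∀ j ≤ k, ych k n A i j ≠ 0)
    (hab : (a : ℤ) = 2 * c ∧ 1 ≤ a ∧ b = 0 ∨ a = 0 ∧ (b : ℤ) = 1 - 2 * c) :
    sumA k n (ych k n A) (2 * c - 1) + sumB k n (ych k n A) (2 * c - 1) = labelRatio A c a b := by
  have telescope : ∑ t ∈ range (n - k),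
      (labelRatio A c (a + t) (b + t) - labelRatio A c (a + (t + 1)) (b + (t + 1))) =
        labelRatio A c a b := by
    rw [sum_range_sub' fun t => labelRatio A c (a + t) (b + t),
      labelRatio_eq_zero (a := a + (n - k)) (by omega), sub_zero]
    rfl
  rw [← telescope]
  rcases hab with ⟨hac, ha, rfl⟩ | ⟨rfl, hbc⟩
  · rw [sumA_eq_sum_range hy (a := a) (b := 1) (by omega) (.inr rfl),
      sumB_eq_sum_range hy (a := a) (b := 0) (by omega) ha (.inr rfl), ← sum_add_distrib]
    refine sum_congr rfl fun t _ => ?_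
    rw [add_comm 1 t, zero_add, zero_add]
    ring_nf
  · rw [sumA_eq_sum_range hy (a := 0) (b := b) (by omega) (.inl rfl),
      sumB_eq_sum_range hy (a := 1) (b := b) (by omega) le_rfl (.inl rfl), ← sum_add_distrib]
    refine sum_congr rfl fun t _ => ?_
    rw [add_comm 1 t, zero_add, zero_add]
    ring_nf

theorem Jcyc_eq_Jch (hkn : k ≤ n) (ha : a ≤ n - k) (hb : b ≤ k)
    (hab : (a : ℤ) = 2 * c ∧ b = 0 ∨ a = 0 ∧ (b : ℤ) = 1 - 2 * c) :
    Jcyc n k (-c : ℤ) = Jch k n a b := by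
  rw [Jcyc_intCast_eq_image, Jch_eq_image (s := (a + b + 1) / 2) hkn ha hb (by omega)]
  intro t
  rw [mem_Icc]
  omega

theorem plucker_Jplus_div_plucker_Jcyc_eq_labelRatio (hkn : k ≤ n) (ha : a < n - k) (hb : b < k)
    (hab : (a : ℤ) = 2 * c ∧ b = 0 ∨ a = 0 ∧ (b : ℤ) = 1 - 2 * c) :
    plucker n (n - k) A (Jplus n k (n - c : ℤ)) / plucker n (n - k) A (Jcyc n k (n - c : ℤ)) =
      labelRatio A c a b := by
  have cast_eq : ((n - c : ℤ) : ZMod n) = (-c : ℤ) := by simp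
  rw [plucker_Jplus_div_plucker_Jcyc, cast_eq, Jcyc_eq_Jch hkn ha.le hb.le hab, labelRatio,
    if_pos ⟨ha, hb⟩, Nat.cast_sub hkn]
  push_cast
  ring_nf

end Telescoping

/-- the upward-diagonal superpotential term formula for the
checkboard graph, for `−⌊(k−2)/2⌋ ≤ c ≤ ⌈(n−k−2)/2⌉`. -/
theorem superpotential_term_upward
    (n k : ℕ) (hn : 4 ≤ n) (hk : 2 ≤ k) (hkn : k ≤ n - 2)
    (A : Matrix (Fin (n - k)) (ZMod n) ℂ)
    (hy : ∀ i ≤ n - k, ∀ j ≤ k, ych k n A i j ≠ 0)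
    (c : ℤ) (hc1 : -(((k - 2) / 2 : ℕ) : ℤ) ≤ c) (hc2 : c ≤ (((n - k - 2 + 1) / 2 : ℕ) : ℤ)) :
    plucker n (n - k) A (Jplus n k ((((n : ℤ) - c : ℤ)) : ZMod n)) /
        plucker n (n - k) A (Jcyc n k ((((n : ℤ) - c : ℤ)) : ZMod n)) =
      sumA k n (ych k n A) (2 * c - 1) + sumB k n (ych k n A) (2 * c - 1) := by
  obtain ⟨a, b, ha, hb, hab⟩ : ∃ a b : ℕ, a < n - k ∧ b < k ∧
      ((a : ℤ) = 2 * c ∧ 1 ≤ a ∧ b = 0 ∨ a = 0 ∧ (b : ℤ) = 1 - 2 * c) := by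
    rcases le_or_gt c 0 with hc | hc
    · exact ⟨0, (1 - 2 * c).toNat, by omega, by omega, by omega⟩
    · exact ⟨(2 * c).toNat, 0, by omega, by omega, by omega⟩
  rw [plucker_Jplus_div_plucker_Jcyc_eq_labelRatio (by omega) ha hb (by omega),
    sumA_add_sumB_eq_labelRatio hy hab]
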